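/- arXiv:1705.06214 — 6 statements merged into one kernel-verified Lean document; each statement's English description precedes it below -/
import Mathlib

section
/- For all S5-interpretations I, J and all (w,d) ∈ W^I × Δ^I, (v,e) ∈ W^J × Δ^J: if I,w,d ≈_{2n+1} J,v,e then I,w,d ≈^alt_n J,v,e. -/
/-! Core definitions: S5-interpretations, S5^loc_ALC concepts, S5_FOL formulas,
    bisimulations, games, Gaifman locality, unravellings, normal forms,
    and the two-sorted correspondence language. -/

/-- An S5-interpretation: nonempty sets of worlds and individuals, and for each
world an ALC interpretation of concept and role names. -/
structure S5Interp (NC NR : Type) : Type 1 where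
  W : Type
  Δ : Type
  W_nonempty : Nonempty W
  Δ_nonempty : Nonempty Δ
  conc : NC → W → Set Δ
  role : NR → W → Set (Δ × Δ)

variable {NC NR : Type}

/-- Concepts of S5^loc_ALC : C ::= A | ¬C | C ⊓ D | ∃r.C | □C. -/
inductive DLConcept (NC NR : Type) : Type where
  | atom : NC → DLConcept NC NR
  | neg  : DLConcept NC NR → DLConcept NC NR
  | and  : DLConcept NC NR → DLConcept NC NR → DLConcept NC NR
  | ex   : NR → DLConcept NC NR → DLConcept NC NR
  | box  : DLConcept NC NR → DLConcept NC NR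

/-- ◇C := ¬□¬C. -/
def DLConcept.dia (C : DLConcept NC NR) : DLConcept NC NR := .neg (.box (.neg C))

/-- Satisfaction I,w,d ⊨ C. -/
def DLConcept.Sat (I : S5Interp NC NR) : I.W → I.Δ → DLConcept NC NR → Prop
  | w, d, .atom A  => d ∈ I.conc A w
  | w, d, .neg C   => ¬ DLConcept.Sat I w d C
  | w, d, .and C D => DLConcept.Sat I w d C ∧ DLConcept.Sat I w d D
  | w, d, .ex r C  => ∃ e, (d, e) ∈ I.role r w ∧ DLConcept.Sat I w e C
  | _, d, .box C   => ∀ v, DLConcept.Sat I v d C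

/-- Rank of a concept: maximal nesting depth of □ and ∃r. -/
def DLConcept.rank : DLConcept NC NR → ℕ
  | .atom _  => 0
  | .neg C   => C.rank
  | .and C D => max C.rank D.rank
  | .ex _ C  => C.rank + 1
  | .box C   => C.rank + 1

/-- Formulas of S5-modalized first-order logic over the correspondence
language (variables are natural numbers). -/
inductive FOForm (NC NR : Type) : Type where
  | conc : NC → ℕ → FOForm NC NR
  | role : NR → ℕ → ℕ → FOForm NC NR
  | eq   : ℕ → ℕ → FOForm NC NR
  | neg  : FOForm NC NR → FOForm NC NR
  | and  : FOForm NC NR → FOForm NC NR → FOForm NC NR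
  | ex   : ℕ → FOForm NC NR → FOForm NC NR
  | box  : FOForm NC NR → FOForm NC NR

/-- Satisfaction I,w,η ⊨ φ for S5_FOL. -/
def FOForm.Sat (I : S5Interp NC NR) : I.W → (ℕ → I.Δ) → FOForm NC NR → Prop
  | w, η, .conc A x   => η x ∈ I.conc A w
  | w, η, .role r x y => (η x, η y) ∈ I.role r w
  | _, η, .eq x y     => η x = η y
  | w, η, .neg φ      => ¬ FOForm.Sat I w η φ
  | w, η, .and φ ψ    => FOForm.Sat I w η φ ∧ FOForm.Sat I w η ψ
  | w, η, .ex x φ     => ∃ d, FOForm.Sat I w (Function.update η x d) φ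
  | _, η, .box φ      => ∀ v, FOForm.Sat I v η φ

/-- Rank of a formula: maximal nesting depth of □ and ∃. -/
def FOForm.rank : FOForm NC NR → ℕ
  | .conc _ _   => 0
  | .role _ _ _ => 0
  | .eq _ _     => 0
  | .neg φ      => φ.rank
  | .and φ ψ    => max φ.rank ψ.rank
  | .ex _ φ     => φ.rank + 1
  | .box φ      => φ.rank + 1

/-- Free variables of a formula. -/
def FOForm.freeVars : FOForm NC NR → Set ℕ
  | .conc _ x   => {x}
  | .role _ x y => {x, y}
  | .eq x y     => {x, y}
  | .neg φ      => φ.freeVars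
  | .and φ ψ    => φ.freeVars ∪ ψ.freeVars
  | .ex x φ     => φ.freeVars \ {x}
  | .box φ      => φ.freeVars

/-- The standard translation ST_x, using x+1 as the fresh variable for
existential restrictions. -/
def standardTranslation : ℕ → DLConcept NC NR → FOForm NC NR
  | x, .atom A  => .conc A x
  | x, .neg C   => .neg (standardTranslation x C)
  | x, .and C D => .and (standardTranslation x C) (standardTranslation x D)
  | x, .ex r C  => .ex (x+1) (.and (.role r x (x+1)) (standardTranslation (x+1) C))
  | x, .box C   => .box (standardTranslation x C)

/-- Bisimulations between S5-interpretations. -/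
def IsBisimulation (I J : S5Interp NC NR)
    (R : (I.W × I.Δ) → (J.W × J.Δ) → Prop) : Prop :=
  ∀ w d v e, R (w, d) (v, e) →
    (∀ A : NC, d ∈ I.conc A w ↔ e ∈ J.conc A v) ∧
    (∀ w', ∃ v', R (w', d) (v', e)) ∧
    (∀ v', ∃ w', R (w', d) (v', e)) ∧
    (∀ (r : NR) d', (d, d') ∈ I.role r w → ∃ e', (e, e') ∈ J.role r v ∧ R (w, d') (v, e')) ∧
    (∀ (r : NR) e', (e, e') ∈ J.role r v → ∃ d', (d, d') ∈ I.role r w ∧ R (w, d') (v, e'))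

/-- I,w,d ≈ J,v,e : some bisimulation relates (w,d) and (v,e). -/
def Bisimilar (I J : S5Interp NC NR) (w : I.W) (d : I.Δ) (v : J.W) (e : J.Δ) : Prop :=
  ∃ R, IsBisimulation I J R ∧ R (w, d) (v, e)

/-- Depth-n bisimilarity ≈ₙ (Duplicator wins the n-round bisimulation game). -/
def BisimAtDepth (I J : S5Interp NC NR) : ℕ → I.W → I.Δ → J.W → J.Δ → Prop
  | 0, w, d, v, e => ∀ A : NC, d ∈ I.conc A w ↔ e ∈ J.conc A v
  | n+1, w, d, v, e =>
      (∀ A : NC, d ∈ I.conc A w ↔ e ∈ J.conc A v) ∧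
      (∀ w', ∃ v', BisimAtDepth I J n w' d v' e) ∧
      (∀ v', ∃ w', BisimAtDepth I J n w' d v' e) ∧
      (∀ (r : NR) d', (d, d') ∈ I.role r w →
        ∃ e', (e, e') ∈ J.role r v ∧ BisimAtDepth I J n w d' v e') ∧
      (∀ (r : NR) e', (e, e') ∈ J.role r v →
        ∃ d', (d, d') ∈ I.role r w ∧ BisimAtDepth I J n w d' v e')

/-- Atomic agreement of two configurations. -/
def AltAtom (I J : S5Interp NC NR) (w : I.W) (d : I.Δ) (v : J.W) (e : J.Δ) : Prop :=
  ∀ A : NC, d ∈ I.conc A w ↔ e ∈ J.conc A v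

/-- One pair of Δ-moves (in either interpretation), continuing with `P`. -/
def AltDelta (I J : S5Interp NC NR) (P : I.W → I.Δ → J.W → J.Δ → Prop)
    (w : I.W) (d : I.Δ) (v : J.W) (e : J.Δ) : Prop :=
  (∀ (r : NR) d', (d, d') ∈ I.role r w → ∃ e', (e, e') ∈ J.role r v ∧ P w d' v e') ∧
  (∀ (r : NR) e', (e, e') ∈ J.role r v → ∃ d', (d, d') ∈ I.role r w ∧ P w d' v e')

/-- Duplicator wins the n-round alternating bisimulation game (each round:
an optional pair of W-moves followed by a mandatory pair of Δ-moves; one extra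
optional pair of W-moves may be played at the very end). -/
def AltBisim (I J : S5Interp NC NR) : ℕ → I.W → I.Δ → J.W → J.Δ → Prop
  | 0, w, d, v, e =>
      AltAtom I J w d v e ∧
      (∀ w', ∃ v', AltAtom I J w' d v' e) ∧
      (∀ v', ∃ w', AltAtom I J w' d v' e)
  | n+1, w, d, v, e =>
      AltAtom I J w d v e ∧
      AltDelta I J (AltBisim I J n) w d v e ∧
      (∀ w', ∃ v', AltAtom I J w' d v' e ∧ AltDelta I J (AltBisim I J n) w' d v' e) ∧
      (∀ v', ∃ w', AltAtom I J w' d v' e ∧ AltDelta I J (AltBisim I J n) w' d v' e)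

/-- Winning strategies in the unbounded alternating bisimulation game,
presented as relations closed under the game conditions. -/
def IsAltBisimulation (I J : S5Interp NC NR)
    (R : (I.W × I.Δ) → (J.W × J.Δ) → Prop) : Prop :=
  ∀ w d v e, R (w, d) (v, e) →
    AltAtom I J w d v e ∧
    AltDelta I J (fun w' d' v' e' => R (w', d') (v', e')) w d v e ∧
    (∀ w', ∃ v', AltAtom I J w' d v' e ∧
      AltDelta I J (fun a b c f => R (a, b) (c, f)) w' d v' e) ∧
    (∀ v', ∃ w', AltAtom I J w' d v' e ∧
      AltDelta I J (fun a b c f => R (a, b) (c, f)) w' d v' e)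

/-- I,w,d ≈^alt J,v,e : Duplicator wins the unbounded alternating game. -/
def AltBisimilar (I J : S5Interp NC NR) (w : I.W) (d : I.Δ) (v : J.W) (e : J.Δ) : Prop :=
  ∃ R, IsAltBisimulation I J R ∧ R (w, d) (v, e)

/-- Partial isomorphism between configurations of the S5-Ehrenfeucht–Fraïssé game. -/
def PartialIso (I J : S5Interp NC NR) {k : ℕ} (w : I.W) (v : J.W)
    (ds : Fin k → I.Δ) (es : Fin k → J.Δ) : Prop :=
  (∀ i j, ds i = ds j ↔ es i = es j) ∧
  (∀ (A : NC) i, ds i ∈ I.conc A w ↔ es i ∈ J.conc A v) ∧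
  (∀ (r : NR) i j, (ds i, ds j) ∈ I.role r w ↔ (es i, es j) ∈ J.role r v)

/-- S5-Ehrenfeucht–Fraïssé equivalence up to depth n (Duplicator wins the
n-round EF game). -/
def EFEquiv (I J : S5Interp NC NR) :
    ℕ → (k : ℕ) → I.W → (Fin k → I.Δ) → J.W → (Fin k → J.Δ) → Prop
  | 0, _, w, ds, v, es => PartialIso I J w v ds es
  | n+1, k, w, ds, v, es =>
      PartialIso I J w v ds es ∧
      (∀ w', ∃ v', EFEquiv I J n k w' ds v' es) ∧
      (∀ v', ∃ w', EFEquiv I J n k w' ds v' es) ∧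
      (∀ d, ∃ e, EFEquiv I J n (k+1) w (Fin.snoc ds d) v (Fin.snoc es e)) ∧
      (∀ e, ∃ d, EFEquiv I J n (k+1) w (Fin.snoc ds d) v (Fin.snoc es e))

/-- Adjacency in the Gaifman graph of an S5-interpretation. -/
def GaifmanAdj (I : S5Interp NC NR) (d e : I.Δ) : Prop :=
  d ≠ e ∧ ∃ (r : NR) (w : I.W), (d, e) ∈ I.role r w ∨ (e, d) ∈ I.role r w

/-- The radius-ℓ neighbourhood U^ℓ(d) of d in the Gaifman graph
(the set of elements at Gaifman distance at most ℓ from d). -/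
def GaifmanBall (I : S5Interp NC NR) (d : I.Δ) : ℕ → Set I.Δ
  | 0 => {d}
  | ℓ+1 => GaifmanBall I d ℓ ∪ {e | ∃ e' ∈ GaifmanBall I d ℓ, GaifmanAdj I e' e}

lemma mem_gaifmanBall_self (I : S5Interp NC NR) (d : I.Δ) (ℓ : ℕ) :
    d ∈ GaifmanBall I d ℓ := by
  induction ℓ with
  | zero => simp [GaifmanBall]
  | succ n ih => exact Set.mem_union_left _ ih

/-- Restriction I|_U of an S5-interpretation to a nonempty subset U of its domain. -/
def S5Interp.restrict (I : S5Interp NC NR) (U : Set I.Δ) (hU : U.Nonempty) :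
    S5Interp NC NR where
  W := I.W
  Δ := ↥U
  W_nonempty := I.W_nonempty
  Δ_nonempty := hU.to_subtype
  conc A w := {x | (x : I.Δ) ∈ I.conc A w}
  role r w := {p | ((p.1 : I.Δ), (p.2 : I.Δ)) ∈ I.role r w}

/-- Restriction I|_{U^ℓ(d)} to the radius-ℓ Gaifman neighbourhood of d. -/
def S5Interp.ballRestrict (I : S5Interp NC NR) (d : I.Δ) (ℓ : ℕ) : S5Interp NC NR :=
  I.restrict (GaifmanBall I d ℓ) ⟨d, mem_gaifmanBall_self I d ℓ⟩

/-- The point d viewed inside I|_{U^ℓ(d)}. -/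
def S5Interp.ballPt (I : S5Interp NC NR) (d : I.Δ) (ℓ : ℕ) : (I.ballRestrict d ℓ).Δ :=
  ⟨d, mem_gaifmanBall_self I d ℓ⟩

/-- A formula φ with (single) free variable x is ℓ-local if its truth at d only
depends on the restriction of the interpretation to U^ℓ(d). -/
def IsLocal (φ : FOForm NC NR) (x : ℕ) (ℓ : ℕ) : Prop :=
  ∀ (I : S5Interp NC NR) (w : I.W) (d : I.Δ)
    (η : ℕ → I.Δ) (θ : ℕ → (I.ballRestrict d ℓ).Δ),
    η x = d → (θ x).val = d →
    (FOForm.Sat I w η φ ↔ FOForm.Sat (I.ballRestrict d ℓ) w θ φ)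

/-- φ (with single free variable x) is bisimulation invariant. -/
def BisimInvariant (φ : FOForm NC NR) (x : ℕ) : Prop :=
  ∀ (I J : S5Interp NC NR) (w : I.W) (d : I.Δ) (v : J.W) (e : J.Δ),
    Bisimilar I J w d v e →
    ∀ (η : ℕ → I.Δ) (θ : ℕ → J.Δ), η x = d → θ x = e →
      (FOForm.Sat I w η φ ↔ FOForm.Sat J v θ φ)

/-- φ (with single free variable x) is bisimulation invariant over finite
S5-interpretations. -/
def BisimInvariantFin (φ : FOForm NC NR) (x : ℕ) : Prop :=
  ∀ (I J : S5Interp NC NR), Finite I.W → Finite I.Δ → Finite J.W → Finite J.Δ →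
    ∀ (w : I.W) (d : I.Δ) (v : J.W) (e : J.Δ),
    Bisimilar I J w d v e →
    ∀ (η : ℕ → I.Δ) (θ : ℕ → J.Δ), η x = d → θ x = e →
      (FOForm.Sat I w η φ ↔ FOForm.Sat J v θ φ)

/-- One step along some role at some world (the edge relation used in tree unravellings). -/
def roleStep (I : S5Interp NC NR) (a b : I.Δ) : Prop :=
  ∃ (r : NR) (w : I.W), (a, b) ∈ I.role r w

/-- Paths from d₀: a path (d₀,d₁,…,d_k) is encoded by its tail list (d₁,…,d_k). -/
def UPath (I : S5Interp NC NR) (d0 : I.Δ) : Type :=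
  { l : List I.Δ // List.Chain (roleStep I) d0 l }

/-- π : the last entry of a path. -/
def UPath.last {I : S5Interp NC NR} {d0 : I.Δ} (p : UPath I d0) : I.Δ :=
  (d0 :: p.val).getLast (by simp)

/-- The tree unravelling I*_{d₀}. -/
def S5Interp.unravel (I : S5Interp NC NR) (d0 : I.Δ) : S5Interp NC NR where
  W := I.W
  Δ := UPath I d0
  W_nonempty := I.W_nonempty
  Δ_nonempty := ⟨⟨[], List.Chain.nil⟩⟩
  conc A w := {p | p.last ∈ I.conc A w}
  role r w := {q | ∃ d, (q.1.last, d) ∈ I.role r w ∧ q.2.val = q.1.val ++ [d]}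

/-- Paths from d₀ of length at most ℓ. -/
def PPath (I : S5Interp NC NR) (d0 : I.Δ) (ℓ : ℕ) : Type :=
  { l : List I.Δ // List.Chain (roleStep I) d0 l ∧ l.length ≤ ℓ }

def PPath.last {I : S5Interp NC NR} {d0 : I.Δ} {ℓ : ℕ} (p : PPath I d0 ℓ) : I.Δ :=
  (d0 :: p.val).getLast (by simp)

/-- The map ρ of the partial unravelling: a surviving path goes to its last
entry, an element of the fresh copy of I to itself. -/
def punravelProj (I : S5Interp NC NR) (d0 : I.Δ) (ℓ : ℕ) :
    PPath I d0 ℓ ⊕ I.Δ → I.Δ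
  | Sum.inl p => p.last
  | Sum.inr d => d

/-- The partial unravelling of I at d₀ up to level ℓ: the tree unravelling
restricted to the radius-(ℓ+1) Gaifman neighbourhood of the root, with each
leaf path at distance ℓ+1 identified with its last entry in a fresh disjoint
copy of I. -/
def S5Interp.partialUnravel (I : S5Interp NC NR) (d0 : I.Δ) (ℓ : ℕ) :
    S5Interp NC NR where
  W := I.W
  Δ := PPath I d0 ℓ ⊕ I.Δ
  W_nonempty := I.W_nonempty
  Δ_nonempty := ⟨Sum.inl ⟨[], List.Chain.nil, Nat.zero_le _⟩⟩
  conc A w := {x | punravelProj I d0 ℓ x ∈ I.conc A w}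
  role r w := fun q =>
    match q with
    | (Sum.inl p, Sum.inl p') => ∃ d, (p.last, d) ∈ I.role r w ∧ p'.val = p.val ++ [d]
    | (Sum.inl p, Sum.inr d) => p.val.length = ℓ ∧ (p.last, d) ∈ I.role r w
    | (Sum.inr _, Sum.inl _) => False
    | (Sum.inr d, Sum.inr d') => (d, d') ∈ I.role r w

/-! Normal forms, over the finite signature N_C = {A_0,…,A_s}, N_R = {r_0,…,r_{t-1}}. -/

/-- Conjunction of a list of concepts (the empty conjunction is ⊤, encoded as
¬(A₀ ⊓ ¬A₀); it is never used since atom lists are nonempty). -/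
def bigConj (s t : ℕ) : List (DLConcept (Fin (s+1)) (Fin t)) → DLConcept (Fin (s+1)) (Fin t)
  | [] => .neg (.and (.atom 0) (.neg (.atom 0)))
  | [C] => C
  | C :: D :: L => .and C (bigConj s t (D :: L))

/-- Disjunction of a list of concepts (the empty disjunction is ⊥ = A₀ ⊓ ¬A₀). -/
def bigDisj (s t : ℕ) : List (DLConcept (Fin (s+1)) (Fin t)) → DLConcept (Fin (s+1)) (Fin t)
  | [] => .and (.atom 0) (.neg (.atom 0))
  | [C] => C
  | C :: D :: L => .neg (.and (.neg C) (.neg (bigDisj s t (D :: L))))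

/-- All lists obtained from a given list of atoms by choosing a sign
(nothing or negation) for each atom, in order. -/
def signedAll (s t : ℕ) :
    List (DLConcept (Fin (s+1)) (Fin t)) → List (List (DLConcept (Fin (s+1)) (Fin t)))
  | [] => [[]]
  | B :: L =>
      ((signedAll s t L).map (fun T => B :: T)) ++
      ((signedAll s t L).map (fun T => DLConcept.neg B :: T))

/-- The atoms of rank k, given the list of normal forms of rank k−1:
at_k = N_C ∪ {∃r.C | C ∈ nf_{k−1}} ∪ {◇C | C ∈ nf_{k−1}} (in a fixed order). -/
def atomsOf (s t : ℕ) (prev : List (DLConcept (Fin (s+1)) (Fin t))) :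
    List (DLConcept (Fin (s+1)) (Fin t)) :=
  ((List.finRange (s+1)).map DLConcept.atom)
    ++ ((List.finRange t).flatMap (fun r => prev.map (DLConcept.ex r)))
    ++ (prev.map DLConcept.dia)

/-- The normal forms of rank k (as a list enumerating the set nf_k in a fixed
order): all signed conjunctions over the atoms of rank k, where nf_{−1} = ∅. -/
def nfList (s t : ℕ) : ℕ → List (DLConcept (Fin (s+1)) (Fin t))
  | 0 => (signedAll s t (atomsOf s t [])).map (bigConj s t)
  | k+1 => (signedAll s t (atomsOf s t (nfList s t k))).map (bigConj s t)

/-! The two-sorted correspondence language SL. -/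

/-- Formulas of the two-sorted first-order language SL (domain variables and
world variables are natural numbers; each predicate takes one extra
world-sort argument). -/
inductive SLForm (NC NR : Type) : Type where
  | conc : NC → ℕ → ℕ → SLForm NC NR        -- A(x, v)
  | role : NR → ℕ → ℕ → ℕ → SLForm NC NR    -- r(x, y, v)
  | eqD  : ℕ → ℕ → SLForm NC NR             -- x = y (domain sort)
  | eqW  : ℕ → ℕ → SLForm NC NR             -- v = u (world sort)
  | neg  : SLForm NC NR → SLForm NC NR
  | and  : SLForm NC NR → SLForm NC NR → SLForm NC NR
  | exD  : ℕ → SLForm NC NR → SLForm NC NR  -- ∃x (domain sort)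
  | exW  : ℕ → SLForm NC NR → SLForm NC NR  -- ∃v (world sort)

/-- Satisfaction for SL over S5-interpretations, with a domain valuation η and
a world valuation ξ. -/
def SLForm.Sat (I : S5Interp NC NR) : (ℕ → I.Δ) → (ℕ → I.W) → SLForm NC NR → Prop
  | η, ξ, .conc A x v   => η x ∈ I.conc A (ξ v)
  | η, ξ, .role r x y v => (η x, η y) ∈ I.role r (ξ v)
  | η, _, .eqD x y      => η x = η y
  | _, ξ, .eqW v u      => ξ v = ξ u
  | η, ξ, .neg φ        => ¬ SLForm.Sat I η ξ φ
  | η, ξ, .and φ ψ      => SLForm.Sat I η ξ φ ∧ SLForm.Sat I η ξ ψ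
  | η, ξ, .exD x φ      => ∃ d, SLForm.Sat I (Function.update η x d) ξ φ
  | η, ξ, .exW v φ      => ∃ u, SLForm.Sat I η (Function.update ξ v u) φ

/-- Free domain-sort variables of an SL formula. -/
def SLForm.freeDVars : SLForm NC NR → Set ℕ
  | .conc _ x _   => {x}
  | .role _ x y _ => {x, y}
  | .eqD x y      => {x, y}
  | .eqW _ _      => ∅
  | .neg φ        => φ.freeDVars
  | .and φ ψ      => φ.freeDVars ∪ ψ.freeDVars
  | .exD x φ      => φ.freeDVars \ {x}
  | .exW _ φ      => φ.freeDVars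

/-- Free world-sort variables of an SL formula. -/
def SLForm.freeWVars : SLForm NC NR → Set ℕ
  | .conc _ _ v   => {v}
  | .role _ _ _ v => {v}
  | .eqD _ _      => ∅
  | .eqW v u      => {v, u}
  | .neg φ        => φ.freeWVars
  | .and φ ψ      => φ.freeWVars ∪ ψ.freeWVars
  | .exD _ φ      => φ.freeWVars
  | .exW v φ      => φ.freeWVars \ {v}

/-- The translation (−)^{†_v} of S5_FOL into SL: predicates get the world
variable v as extra argument, and □ becomes universal quantification over v. -/
def dagger (v : ℕ) : FOForm NC NR → SLForm NC NR
  | .conc A x   => .conc A x v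
  | .role r x y => .role r x y v
  | .eq x y     => .eqD x y
  | .neg φ      => .neg (dagger v φ)
  | .and φ ψ    => .and (dagger v φ) (dagger v ψ)
  | .ex x φ     => .exD x (dagger v φ)
  | .box φ      => .neg (.exW v (.neg (dagger v φ)))

lemma bisimAtDepth_pred (NC NR : Type) (I J : S5Interp NC NR) : ∀ (n : ℕ)
    (w : I.W) (d : I.Δ) (v : J.W) (e : J.Δ),
    BisimAtDepth I J (n + 1) w d v e → BisimAtDepth I J n w d v e
  | 0, _, _, _, _, h => h.1
  | n + 1, w, d, v, e, h => by
    obtain ⟨h0, h1, h2, h3, h4⟩ := h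
    refine ⟨h0, fun w' => ?_, fun v' => ?_, fun r d' hd => ?_, fun r e' he => ?_⟩
    · obtain ⟨v', h⟩ := h1 w'
      exact ⟨v', bisimAtDepth_pred NC NR I J n _ _ _ _ h⟩
    · obtain ⟨w', h⟩ := h2 v'
      exact ⟨w', bisimAtDepth_pred NC NR I J n _ _ _ _ h⟩
    · obtain ⟨e', he, h⟩ := h3 r d' hd
      exact ⟨e', he, bisimAtDepth_pred NC NR I J n _ _ _ _ h⟩
    · obtain ⟨d', hd, h⟩ := h4 r e' he
      exact ⟨d', hd, bisimAtDepth_pred NC NR I J n _ _ _ _ h⟩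

lemma bisimAtDepth_delta (NC NR : Type) (I J : S5Interp NC NR) (n : ℕ)
    (P : I.W → I.Δ → J.W → J.Δ → Prop)
    (hP : ∀ w d v e, BisimAtDepth I J n w d v e → P w d v e)
    (w : I.W) (d : I.Δ) (v : J.W) (e : J.Δ)
    (h : BisimAtDepth I J (n + 1) w d v e) :
    AltAtom I J w d v e ∧ AltDelta I J P w d v e := by
  obtain ⟨h0, _, _, h3, h4⟩ := h
  refine ⟨h0, fun r d' hd => ?_, fun r e' he => ?_⟩
  · obtain ⟨e', he, h⟩ := h3 r d' hd
    exact ⟨e', he, hP _ _ _ _ h⟩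
  · obtain ⟨d', hd, h⟩ := h4 r e' he
    exact ⟨d', hd, hP _ _ _ _ h⟩

/-- depth-(2n+1) bisimilarity implies Duplicator wins the
n-round alternating bisimulation game. -/
theorem bisimAtDepth_to_altBisim (NC NR : Type) (I J : S5Interp NC NR) (n : ℕ)
    (w : I.W) (d : I.Δ) (v : J.W) (e : J.Δ)
    (h : BisimAtDepth I J (2 * n + 1) w d v e) :
    AltBisim I J n w d v e := by
  induction n generalizing w d v e with
  | zero =>
    obtain ⟨h0, h1, h2, _, _⟩ := h
    exact ⟨h0, h1, h2⟩
  | succ n ih =>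
    have key := bisimAtDepth_delta NC NR I J (2 * n + 1) (AltBisim I J n) ih
    have h' : BisimAtDepth I J (2 * n + 1 + 1 + 1) w d v e := h
    have hd := key w d v e (bisimAtDepth_pred NC NR I J _ _ _ _ _ h')
    obtain ⟨_, h1, h2, _, _⟩ := h'
    refine ⟨hd.1, hd.2, fun w' => ?_, fun v' => ?_⟩
    · obtain ⟨v', hv⟩ := h1 w'
      exact ⟨v', key _ _ _ _ hv⟩
    · obtain ⟨w', hw⟩ := h2 v'
      exact ⟨w', key _ _ _ _ hw⟩
end

section
/- For all S5-interpretations I, J and all (w,d) ∈ W^I × Δ^I, (v,e) ∈ W^J × Δ^J: if I,w,d ≈^alt_n J,v,e then I,w,d ≈_n J,v,e. -/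
variable {NC NR : Type}

lemma AltDelta.mono' {NC NR : Type} {I J : S5Interp NC NR}
    {P Q : I.W → I.Δ → J.W → J.Δ → Prop} (hPQ : ∀ w d v e, P w d v e → Q w d v e)
    {w : I.W} {d : I.Δ} {v : J.W} {e : J.Δ} (h : AltDelta I J P w d v e) :
    AltDelta I J Q w d v e := by
  refine ⟨fun r d' hd => ?_, fun r e' he => ?_⟩
  · obtain ⟨e', h1, h2⟩ := h.1 r d' hd
    exact ⟨e', h1, hPQ _ _ _ _ h2⟩
  · obtain ⟨d', h1, h2⟩ := h.2 r e' he
    exact ⟨d', h1, hPQ _ _ _ _ h2⟩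

lemma AltBisim.pred' {NC NR : Type} {I J : S5Interp NC NR} (n : ℕ) :
    ∀ (w : I.W) (d : I.Δ) (v : J.W) (e : J.Δ),
      AltBisim I J (n + 1) w d v e → AltBisim I J n w d v e := by
  induction n with
  | zero =>
    intro w d v e h
    obtain ⟨ha, _, h1, h2⟩ := h
    exact ⟨ha, fun w' => (h1 w').imp fun _ h => h.1, fun v' => (h2 v').imp fun _ h => h.1⟩
  | succ n ih =>
    intro w d v e h
    obtain ⟨ha, hd, h1, h2⟩ := h
    exact ⟨ha, hd.mono' ih, fun w' => (h1 w').imp fun _ h => ⟨h.1, h.2.mono' ih⟩,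
      fun v' => (h2 v').imp fun _ h => ⟨h.1, h.2.mono' ih⟩⟩

/-- if Duplicator wins the n-round alternating bisimulation game,
then depth-n bisimilarity holds. -/
theorem altBisim_to_bisimAtDepth (NC NR : Type) (I J : S5Interp NC NR) (n : ℕ)
    (w : I.W) (d : I.Δ) (v : J.W) (e : J.Δ)
    (h : AltBisim I J n w d v e) :
    BisimAtDepth I J n w d v e := by
  induction n generalizing w d v e with
  | zero => exact h.1
  | succ n ih =>
    obtain ⟨ha, hd, h1, h2⟩ := h
    refine ⟨ha, fun w' => ?_, fun v' => ?_, fun r d' hr => ?_, fun r e' hr => ?_⟩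
    · obtain ⟨v', h3, h4⟩ := h1 w'
      exact ⟨v', ih _ _ _ _ (AltBisim.pred' n _ _ _ _ ⟨h3, h4, h1, h2⟩)⟩
    · obtain ⟨w', h3, h4⟩ := h2 v'
      exact ⟨w', ih _ _ _ _ (AltBisim.pred' n _ _ _ _ ⟨h3, h4, h1, h2⟩)⟩
    · obtain ⟨e', h3, h4⟩ := hd.1 r d' hr
      exact ⟨e', h3, ih _ _ _ _ h4⟩
    · obtain ⟨d', h3, h4⟩ := hd.2 r e' hr
      exact ⟨d', h3, ih _ _ _ _ h4⟩
end

section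
/- Let φ = φ(x) be an S5_FOL formula of rank n with one free variable that is bisimulation invariant. Then φ is ℓ-local for ℓ = 3^n: for every S5-interpretation I, every w ∈ W^I and d ∈ Δ^I, I,w,d ⊨ φ if and only if I|_{U^ℓ(d)},w,d ⊨ φ. -/
variable {NC NR : Type}

theorem ball_mono (I : S5Interp NC NR) (d : I.Δ) {m k : ℕ} (h : m ≤ k) :
    GaifmanBall I d m ⊆ GaifmanBall I d k := by
  induction h with
  | refl => exact subset_rfl
  | step _ ih => exact fun a ha => Or.inl (ih ha)

theorem ball_trans (I : S5Interp NC NR) {a b : I.Δ} {m : ℕ} (h : b ∈ GaifmanBall I a m) :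
    ∀ (k : ℕ) (c : I.Δ), c ∈ GaifmanBall I b k → c ∈ GaifmanBall I a (m + k) := by
  intro k
  induction k with
  | zero =>
    intro c hc
    have : c = b := hc
    subst this
    exact h
  | succ k ih =>
    rintro c (hc | ⟨e, he, hadj⟩)
    · exact Or.inl (ih c hc)
    · exact Or.inr ⟨e, ih e he, hadj⟩

theorem gadj_symm (I : S5Interp NC NR) {a b : I.Δ} (h : GaifmanAdj I a b) : GaifmanAdj I b a := by
  obtain ⟨hne, r, w, h⟩ := h
  exact ⟨hne.symm, r, w, h.symm⟩

theorem ball_symm (I : S5Interp NC NR) {a : I.Δ} :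
    ∀ (m : ℕ) (b : I.Δ), b ∈ GaifmanBall I a m → a ∈ GaifmanBall I b m := by
  intro m
  induction m with
  | zero => intro b hb; exact Eq.symm hb
  | succ m ih =>
    rintro b (hb | ⟨e, he, hadj⟩)
    · exact Or.inl (ih b hb)
    · have h1 : e ∈ GaifmanBall I b 1 := Or.inr ⟨b, rfl, gadj_symm I hadj⟩
      have := ball_trans I h1 m a (ih e he)
      rwa [Nat.add_comm] at this

theorem role_ball (I : S5Interp NC NR) {a b : I.Δ} {r : NR} {w : I.W}
    (h : (a, b) ∈ I.role r w) : b ∈ GaifmanBall I a 1 := by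
  by_cases hab : a = b
  · subst hab; exact mem_gaifmanBall_self I a 1
  · exact Or.inr ⟨a, rfl, hab, r, w, Or.inl h⟩

/-- Disjoint union (over the same worlds) of infinitely many copies of `I` and of `I|_U`. -/
def multi (I : S5Interp NC NR) (U : Set I.Δ) : S5Interp NC NR where
  W := I.W
  Δ := {p : (Bool × ℕ) × I.Δ // p.1.1 = true ∨ p.2 ∈ U}
  W_nonempty := I.W_nonempty
  Δ_nonempty := I.Δ_nonempty.elim fun a => ⟨⟨((true, 0), a), Or.inl rfl⟩⟩
  conc A w := {p | p.1.2 ∈ I.conc A w}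
  role r w := {q | q.1.1.1 = q.2.1.1 ∧ (q.1.1.2, q.2.1.2) ∈ I.role r w}

theorem bisim_full (I : S5Interp NC NR) (U : Set I.Δ) (w : I.W) (d : I.Δ) :
    Bisimilar I (multi I U) w d w ⟨((true, 0), d), Or.inl rfl⟩ := by
  refine ⟨fun p q => p.1 = q.1 ∧ q.2.1 = ((true, 0), p.2), ?_, rfl, rfl⟩
  rintro w d v ⟨⟨i, e⟩, he⟩ ⟨h1, h2⟩
  simp only [Prod.mk.injEq] at h1 h2
  obtain ⟨rfl, rfl⟩ := h2
  subst h1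
  refine ⟨fun A => Iff.rfl, fun w' => ⟨w', rfl, rfl⟩, fun w' => ⟨w', rfl, rfl⟩, ?_, ?_⟩
  · intro r d' h
    exact ⟨⟨((true, 0), d'), Or.inl rfl⟩, ⟨rfl, h⟩, rfl, rfl⟩
  · rintro r ⟨⟨i, e⟩, he'⟩ ⟨h3, h4⟩
    have h3 : (true, 0) = i := h3
    subst h3
    exact ⟨e, h4, rfl, rfl⟩

theorem bisim_restr (I : S5Interp NC NR) (U : Set I.Δ) (hU : U.Nonempty) (w : I.W) (d : I.Δ)
    (hd : d ∈ U) :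
    Bisimilar (I.restrict U hU) (multi I U) w ⟨d, hd⟩ w ⟨((false, 0), d), Or.inr hd⟩ := by
  refine ⟨fun p q => p.1 = q.1 ∧ q.2.1 = ((false, 0), p.2.1), ?_, rfl, rfl⟩
  rintro w ⟨d, hd⟩ v ⟨⟨i, e⟩, he⟩ ⟨h1, h2⟩
  simp only [Prod.mk.injEq] at h1 h2
  obtain ⟨rfl, rfl⟩ := h2
  subst h1
  refine ⟨fun A => Iff.rfl, fun w' => ⟨w', rfl, rfl⟩, fun w' => ⟨w', rfl, rfl⟩, ?_, ?_⟩
  · rintro r ⟨d', hd'⟩ h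
    exact ⟨⟨((false, 0), d'), Or.inr hd'⟩, ⟨rfl, h⟩, rfl, rfl⟩
  · rintro r ⟨⟨i, e⟩, he'⟩ ⟨h3, h4⟩
    have h3 : (false, 0) = i := h3
    subst h3
    have he2 : e ∈ U := by simpa using he'
    exact ⟨⟨e, he2⟩, h4, rfl, rfl⟩

/-- Invariant of the game with `k` rounds left on the variables in `S`. -/
structure GInv (I : S5Interp NC NR) (U : Set I.Δ) (k : ℕ) (S : Finset ℕ)
    (η θ : ℕ → (multi I U).Δ) : Prop where
  same : ∀ x ∈ S, (η x).1.2 = (θ x).1.2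
  idx : ∀ x ∈ S, ∀ y ∈ S, (η y).1.2 ∈ GaifmanBall I (η x).1.2 (3 ^ k) →
    ((η x).1.1 = (η y).1.1 ↔ (θ x).1.1 = (θ y).1.1)
  typ : ∀ x ∈ S, (η x).1.1.1 = (θ x).1.1.1 ∨
    ∀ m, 2 * m + 1 ≤ 3 ^ k → GaifmanBall I (η x).1.2 m ⊆ U

theorem GInv.symm {I : S5Interp NC NR} {U : Set I.Δ} {k : ℕ} {S : Finset ℕ}
    {η θ : ℕ → (multi I U).Δ} (h : GInv I U k S η θ) : GInv I U k S θ η where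
  same x hx := (h.same x hx).symm
  idx x hx y hy hb := by
    rw [← h.same x hx, ← h.same y hy] at hb
    exact (h.idx x hx y hy hb).symm
  typ x hx := by
    rw [← h.same x hx]
    exact (h.typ x hx).imp Eq.symm id

theorem GInv.mono {I : S5Interp NC NR} {U : Set I.Δ} {k : ℕ} {S : Finset ℕ}
    {η θ : ℕ → (multi I U).Δ} (h : GInv I U (k + 1) S η θ) : GInv I U k S η θ := by
  have h3 : 3 ^ k ≤ 3 ^ (k + 1) := Nat.pow_le_pow_right (by norm_num) (by omega)
  exact ⟨h.same, fun x hx y hy hb => h.idx x hx y hy (ball_mono I _ h3 hb),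
    fun x hx => (h.typ x hx).imp id fun H m hm => H m (hm.trans h3)⟩

theorem GInv.restr {I : S5Interp NC NR} {U : Set I.Δ} {k : ℕ} {S T : Finset ℕ}
    {η θ : ℕ → (multi I U).Δ} (h : GInv I U k S η θ) (hT : T ⊆ S) : GInv I U k T η θ :=
  ⟨fun x hx => h.same x (hT hx), fun x hx y hy => h.idx x (hT hx) y (hT hy),
    fun x hx => h.typ x (hT hx)⟩

/-- Extending the invariant by one pebble pair. -/
theorem GInv.extend {I : S5Interp NC NR} {U : Set I.Δ} {k : ℕ} {S : Finset ℕ}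
    {η θ : ℕ → (multi I U).Δ} (h : GInv I U k S η θ) (x : ℕ) (hx : x ∉ S)
    (p q : (multi I U).Δ) (hs : p.1.2 = q.1.2)
    (hi : ∀ z ∈ S, (η z).1.2 ∈ GaifmanBall I p.1.2 (3 ^ k) →
      (p.1.1 = (η z).1.1 ↔ q.1.1 = (θ z).1.1))
    (ht : p.1.1.1 = q.1.1.1 ∨ ∀ m, 2 * m + 1 ≤ 3 ^ k → GaifmanBall I p.1.2 m ⊆ U) :
    GInv I U k (insert x S) (Function.update η x p) (Function.update θ x q) := by
  have hne : ∀ z ∈ S, z ≠ x := fun z hz e => hx (e ▸ hz)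
  refine ⟨?_, ?_, ?_⟩
  · intro z hz
    rcases Finset.mem_insert.1 hz with rfl | hz
    · simpa using hs
    · simpa [hne z hz] using h.same z hz
  · intro y hy z hz
    rcases Finset.mem_insert.1 hy with rfl | hy' <;> rcases Finset.mem_insert.1 hz with rfl | hz'
    · simp
    · simpa [hne z hz'] using hi z hz'
    · simp only [Function.update_self, Function.update_of_ne (hne y hy')]
      intro hb
      rw [eq_comm, hi y hy' (ball_symm I _ _ hb), eq_comm]
    · simpa [hne z hz', hne y hy'] using h.idx y hy' z hz'
  · intro z hz
    rcases Finset.mem_insert.1 hz with rfl | hz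
    · simpa using ht
    · simpa [hne z hz] using h.typ z hz

theorem GInv.step {I : S5Interp NC NR} {U : Set I.Δ} {k : ℕ} {S : Finset ℕ}
    {η θ : ℕ → (multi I U).Δ} (h : GInv I U (k + 1) S η θ) (x : ℕ) (hx : x ∉ S)
    (p : (multi I U).Δ) : ∃ q : (multi I U).Δ,
    GInv I U k (insert x S) (Function.update η x p) (Function.update θ x q) := by
  have hp3 : 3 ^ (k + 1) = 3 * 3 ^ k := by rw [pow_succ, mul_comm]
  have hpos : 0 < 3 ^ k := Nat.pow_pos (by norm_num)
  have hodd : ∃ s, 3 ^ k = 2 * s + 1 := Odd.pow (by decide)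
  obtain ⟨s, hs⟩ := hodd
  by_cases hc : ∃ y ∈ S, (η y).1.1 = p.1.1 ∧ p.1.2 ∈ GaifmanBall I (η y).1.2 (3 ^ k)
  · obtain ⟨y, hy, hiy, hby⟩ := hc
    have hdom : (θ y).1.1.1 = true ∨ p.1.2 ∈ U := by
      rcases h.typ y hy with ht | ht
      · rw [← ht, hiy]; exact p.2
      · exact Or.inr (ht (3 ^ k) (by omega) hby)
    refine ⟨⟨((θ y).1.1, p.1.2), hdom⟩, h.mono.extend x hx p _ rfl ?_ ?_⟩
    · intro z hz hb
      rw [← hiy]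
      exact h.idx y hy z hz (ball_mono I _ (by omega) (ball_trans I hby _ _ hb))
    · rcases h.typ y hy with ht | ht
      · left; rw [← hiy]; exact ht
      · right
        intro m hm c hcm
        exact ht (3 ^ k + m) (by omega) (ball_trans I hby _ _ hcm)
  · obtain ⟨f, hf⟩ := Infinite.exists_notMem_finset (S.image fun z => (θ z).1.1.2)
    refine ⟨⟨((p.1.1.1, f), p.1.2), p.2⟩, h.mono.extend x hx p _ rfl ?_ (Or.inl rfl)⟩
    intro z hz hb
    refine iff_of_false ?_ ?_
    · intro e
      exact hc ⟨z, hz, e.symm, ball_symm I _ _ hb⟩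
    · intro e
      apply hf
      rw [Finset.mem_image]
      exact ⟨z, hz, by rw [← e]⟩

theorem sat_congr {I : S5Interp NC NR} {U : Set I.Δ} (φ : FOForm NC NR) :
    ∀ (k : ℕ) (S : Finset ℕ) (w : I.W) (η θ : ℕ → (multi I U).Δ), φ.rank ≤ k →
      φ.freeVars ⊆ S → GInv I U k S η θ →
      (FOForm.Sat (multi I U) w η φ ↔ FOForm.Sat (multi I U) w θ φ) := by
  induction φ with
  | conc A x =>
    intro k S w η θ _ hS h
    have hx : x ∈ S := hS rfl
    change (η x).1.2 ∈ I.conc A w ↔ (θ x).1.2 ∈ I.conc A w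
    rw [h.same x hx]
  | role r x y =>
    intro k S w η θ _ hS h
    have hx : x ∈ S := hS (Or.inl rfl)
    have hy : y ∈ S := hS (Or.inr rfl)
    change ((η x).1.1 = (η y).1.1 ∧ ((η x).1.2, (η y).1.2) ∈ I.role r w) ↔
      ((θ x).1.1 = (θ y).1.1 ∧ ((θ x).1.2, (θ y).1.2) ∈ I.role r w)
    rw [← h.same x hx, ← h.same y hy]
    refine and_congr_left fun hr => h.idx x hx y hy ?_
    exact ball_mono I _ (Nat.one_le_pow _ _ (by norm_num)) (role_ball I hr)
  | eq x y =>
    intro k S w η θ _ hS h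
    have hx : x ∈ S := hS (Or.inl rfl)
    have hy : y ∈ S := hS (Or.inr rfl)
    change η x = η y ↔ θ x = θ y
    have key : ∀ p q : (multi I U).Δ, p = q ↔ (p.1.1 = q.1.1 ∧ p.1.2 = q.1.2) := fun p q =>
      Subtype.ext_iff.trans Prod.ext_iff
    rw [key, key, ← h.same x hx, ← h.same y hy]
    refine and_congr_left fun he => h.idx x hx y hy ?_
    rw [he]
    exact mem_gaifmanBall_self I _ _
  | neg φ ih =>
    intro k S w η θ hk hS h
    exact not_congr (ih k S w η θ hk hS h)
  | and φ ψ ih1 ih2 =>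
    intro k S w η θ hk hS h
    have hk : max φ.rank ψ.rank ≤ k := hk
    exact and_congr (ih1 k S w η θ (by omega) (fun _ ha => hS (Or.inl ha)) h)
      (ih2 k S w η θ (by omega) (fun _ ha => hS (Or.inr ha)) h)
  | box φ ih =>
    intro k S w η θ hk hS h
    have hk : φ.rank + 1 ≤ k := hk
    exact forall_congr' fun v => ih k S v η θ (by omega) hS h
  | ex x φ ih =>
    intro k S w η θ hk hS h
    have hk : φ.rank + 1 ≤ k := hk
    obtain ⟨k, rfl⟩ : ∃ j, k = j + 1 := ⟨k - 1, by omega⟩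
    have h' : GInv I U (k + 1) (S.erase x) η θ := h.restr (Finset.erase_subset _ _)
    have hS' : φ.freeVars ⊆ ((insert x (S.erase x) : Finset ℕ) : Set ℕ) := by
      intro a ha
      by_cases hax : a = x
      · simp [hax]
      · have : a ∈ S := hS ⟨ha, hax⟩
        simp [hax, this]
    have hx : x ∉ S.erase x := Finset.notMem_erase _ _
    constructor
    · rintro ⟨p, hp⟩
      obtain ⟨q, hq⟩ := h'.step x hx p
      exact ⟨q, (ih k _ w _ _ (by omega) hS' hq).1 hp⟩
    · rintro ⟨p, hp⟩
      obtain ⟨q, hq⟩ := h'.symm.step x hx p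
      exact ⟨q, (ih k _ w _ _ (by omega) hS' hq).1 hp⟩

/-- every bisimulation-invariant S5_FOL formula of rank n with
one free variable is ℓ-local for ℓ = 3^n. -/
theorem bisim_invariant_local (NC NR : Type) (φ : FOForm NC NR) (x n : ℕ)
    (hfv : φ.freeVars ⊆ {x}) (hrank : φ.rank = n)
    (hinv : BisimInvariant φ x) :
    IsLocal φ x (3 ^ n) := by
  intro I w d η θ hη hθ
  have hd := mem_gaifmanBall_self I d (3 ^ n)
  have hθ' : θ x = ⟨d, hd⟩ := Subtype.ext hθ
  have e1 := hinv I (multi I (GaifmanBall I d (3 ^ n))) w d w _ (bisim_full I _ w d) η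
    (fun _ => ⟨((true, 0), d), Or.inl rfl⟩) hη rfl
  have e2 := hinv (I.ballRestrict d (3 ^ n)) (multi I (GaifmanBall I d (3 ^ n))) w ⟨d, hd⟩ w _
    (bisim_restr I _ ⟨d, hd⟩ w d hd) θ
    (fun _ => ⟨((false, 0), d), Or.inr hd⟩) hθ' rfl
  rw [e1, e2]
  refine sat_congr φ n {x} w _ _ hrank.le (by simpa using hfv) ⟨?_, ?_, ?_⟩
  · intro _ _; rfl
  · intro _ _ _ _ _; exact iff_of_true rfl rfl
  · intro _ _
    right
    intro m hm
    exact ball_mono I d (by omega)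
end

section
/- For every S5-interpretation I, every (w,d) ∈ W^I × Δ^I and every ℓ ≥ 0: I,w,d ≈^alt_ℓ I|_{U^ℓ(d)},w,d, i.e., Duplicator wins the ℓ-round alternating bisimulation game between I at (w,d) and the restriction of I to the radius-ℓ Gaifman neighbourhood of d at (w,d). -/
variable {NC NR : Type}

lemma gaifmanBall_mono (I : S5Interp NC NR) (d : I.Δ) {k l : ℕ} (h : k ≤ l) :
    GaifmanBall I d k ⊆ GaifmanBall I d l := by
  induction h with
  | refl => exact subset_rfl
  | step _ ih => exact ih.trans Set.subset_union_left

lemma gaifmanBall_succ_of_role (I : S5Interp NC NR) (d : I.Δ) {k : ℕ} {e e' : I.Δ} {r : NR}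
    {w : I.W} (he : e ∈ GaifmanBall I d k) (hr : (e, e') ∈ I.role r w) :
    e' ∈ GaifmanBall I d (k + 1) := by
  by_cases h : e = e'
  · subst h
    exact Set.mem_union_left _ he
  · exact Set.mem_union_right _ ⟨e, he, h, r, w, Or.inl hr⟩

lemma ball_altBisim_aux (I : S5Interp NC NR) (d : I.Δ) (l : ℕ) (n : ℕ) :
    ∀ (k : ℕ), n + k ≤ l → ∀ (w : I.W) (e : (I.ballRestrict d l).Δ),
      e.val ∈ GaifmanBall I d k → AltBisim I (I.ballRestrict d l) n w e.val w e := by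
  have hatom : ∀ (w : I.W) (e : (I.ballRestrict d l).Δ),
      AltAtom I (I.ballRestrict d l) w e.val w e := fun _ _ _ => Iff.rfl
  induction n with
  | zero =>
    intro k _ w e _
    exact ⟨hatom w e, fun w' => ⟨w', hatom w' e⟩, fun w' => ⟨w', hatom w' e⟩⟩
  | succ n ih =>
    intro k hk w e he
    have hdelta : ∀ w : I.W, AltDelta I (I.ballRestrict d l)
        (AltBisim I (I.ballRestrict d l) n) w e.val w e := by
      intro w
      constructor
      · intro r d' hr
        have h1 := gaifmanBall_succ_of_role I d he hr
        have h2 : d' ∈ GaifmanBall I d l := gaifmanBall_mono I d (by omega) h1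
        exact ⟨⟨d', h2⟩, hr, ih (k + 1) (by omega) w ⟨d', h2⟩ h1⟩
      · intro r e' hr
        have h1 := gaifmanBall_succ_of_role I d he hr
        exact ⟨e'.val, hr, ih (k + 1) (by omega) w e' h1⟩
    exact ⟨hatom w e, hdelta w, fun w' => ⟨w', hatom w' e, hdelta w'⟩,
      fun w' => ⟨w', hatom w' e, hdelta w'⟩⟩

/-- Duplicator wins the ℓ-round alternating bisimulation game
between I at (w,d) and the restriction of I to the radius-ℓ Gaifman
neighbourhood of d, at (w,d). -/
theorem ball_altBisim (NC NR : Type) (I : S5Interp NC NR) (w : I.W) (d : I.Δ) (ℓ : ℕ) :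
    AltBisim I (I.ballRestrict d ℓ) ℓ w d w (I.ballPt d ℓ) := by
  exact ball_altBisim_aux I d ℓ ℓ 0 (by omega) w (I.ballPt d ℓ) (mem_gaifmanBall_self I d 0)
end

section
/- Let φ be a ≈_k-invariant S5_FOL formula with one free variable x. Then φ is logically equivalent to ST_x(D), where D is the (finite) disjunction of all rank-k normal forms C^k_{I,w,d} over all I,w,d with I,w,d ⊨ φ; in particular, φ is equivalent to the standard translation of an S5^loc_ALC-concept of rank k. -/
variable {NC NR : Type}

/-- The disjunction of all rank-k normal forms C^k_{I,w,d} over all I,w,d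
satisfying φ (at the free variable x). -/
noncomputable def phiNF (s t k x : ℕ) (φ : FOForm (Fin (s+1)) (Fin t)) :
    DLConcept (Fin (s+1)) (Fin t) :=
  bigDisj s t ((nfList s t k).filter (fun C =>
    @decide (∃ (I : S5Interp (Fin (s+1)) (Fin t)) (w : I.W) (d : I.Δ) (η : ℕ → I.Δ),
        η x = d ∧ FOForm.Sat I w η φ ∧ DLConcept.Sat I w d C)
      (Classical.propDecidable _)))

section NFProof

lemma st_sat {NC NR : Type} (I : S5Interp NC NR) (C : DLConcept NC NR) :
    ∀ (x : ℕ) (w : I.W) (η : ℕ → I.Δ),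
      FOForm.Sat I w η (standardTranslation x C) ↔ DLConcept.Sat I w (η x) C := by
  induction C with
  | atom A => intro x w η; rfl
  | neg C ih => intro x w η; simp only [standardTranslation, FOForm.Sat, DLConcept.Sat, ih]
  | and C D ihC ihD =>
    intro x w η; simp only [standardTranslation, FOForm.Sat, DLConcept.Sat, ihC, ihD]
  | ex r C ih =>
    intro x w η
    simp [standardTranslation, FOForm.Sat, DLConcept.Sat, ih]
  | box C ih => intro x w η; simp only [standardTranslation, FOForm.Sat, DLConcept.Sat, ih]

lemma sat_dia {NC NR : Type} (I : S5Interp NC NR) (w : I.W) (d : I.Δ) (C : DLConcept NC NR) :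
    DLConcept.Sat I w d C.dia ↔ ∃ v, DLConcept.Sat I v d C := by
  simp [DLConcept.dia, DLConcept.Sat]

lemma sat_bigConj (s t : ℕ) (I : S5Interp (Fin (s+1)) (Fin t)) (w : I.W) (d : I.Δ) :
    ∀ L, DLConcept.Sat I w d (bigConj s t L) ↔ ∀ C ∈ L, DLConcept.Sat I w d C
  | [] => by simp [bigConj, DLConcept.Sat]
  | [C] => by simp [bigConj]
  | C :: D :: L => by
    have := sat_bigConj s t I w d (D :: L)
    rw [bigConj, DLConcept.Sat, this]; simp

lemma sat_bigDisj (s t : ℕ) (I : S5Interp (Fin (s+1)) (Fin t)) (w : I.W) (d : I.Δ) :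
    ∀ L, DLConcept.Sat I w d (bigDisj s t L) ↔ ∃ C ∈ L, DLConcept.Sat I w d C
  | [] => by simp [bigDisj, DLConcept.Sat]
  | [C] => by simp [bigDisj]
  | C :: D :: L => by
    have := sat_bigDisj s t I w d (D :: L)
    rw [bigDisj]
    simp only [DLConcept.Sat, this, List.exists_mem_cons_iff]
    rw [not_and_or, not_not, not_not]

lemma rank_bigConj (s t k : ℕ) :
    ∀ L : List (DLConcept (Fin (s+1)) (Fin t)), (∀ C ∈ L, C.rank ≤ k) → (bigConj s t L).rank ≤ k
  | [], _ => by simp [bigConj, DLConcept.rank]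
  | [C], h => by simpa [bigConj] using h
  | C :: D :: L, h => by
    have := rank_bigConj s t k (D :: L) (fun E hE => h E (List.mem_cons_of_mem _ hE))
    rw [bigConj, DLConcept.rank]
    exact max_le (h C (by simp)) this

lemma rank_bigDisj (s t k : ℕ) :
    ∀ L : List (DLConcept (Fin (s+1)) (Fin t)), (∀ C ∈ L, C.rank ≤ k) → (bigDisj s t L).rank ≤ k
  | [], _ => by simp [bigDisj, DLConcept.rank]
  | [C], h => by simpa [bigDisj] using h
  | C :: D :: L, h => by
    have := rank_bigDisj s t k (D :: L) (fun E hE => h E (List.mem_cons_of_mem _ hE))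
    rw [bigDisj]
    simp only [DLConcept.rank]
    exact max_le (h C (by simp)) this

lemma rank_signedAll (s t k : ℕ) (L : List (DLConcept (Fin (s+1)) (Fin t)))
    (h : ∀ C ∈ L, C.rank ≤ k) : ∀ T ∈ signedAll s t L, ∀ C ∈ T, C.rank ≤ k := by
  induction L with
  | nil => simp [signedAll]
  | cons B L ih =>
    have hB : B.rank ≤ k := h B (by simp)
    have ih' := ih (fun C hC => h C (List.mem_cons_of_mem _ hC))
    intro T hT C hC
    simp only [signedAll, List.mem_append, List.mem_map] at hT
    rcases hT with ⟨T', hT', rfl⟩ | ⟨T', hT', rfl⟩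
    · rcases List.mem_cons.1 hC with rfl | hC
      · exact hB
      · exact ih' T' hT' C hC
    · rcases List.mem_cons.1 hC with rfl | hC
      · exact hB
      · exact ih' T' hT' C hC

lemma rank_nfList (s t k : ℕ) : ∀ C ∈ nfList s t k, C.rank ≤ k := by
  induction k with
  | zero =>
    intro C hC
    simp only [nfList, List.mem_map] at hC
    obtain ⟨T, hT, rfl⟩ := hC
    refine rank_bigConj s t _ T (rank_signedAll s t _ _ ?_ T hT)
    intro D hD
    simp [atomsOf] at hD
    obtain ⟨a, rfl⟩ := hD
    simp [DLConcept.rank]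
  | succ k ih =>
    intro C hC
    simp only [nfList, List.mem_map] at hC
    obtain ⟨T, hT, rfl⟩ := hC
    refine rank_bigConj s t _ T (rank_signedAll s t _ _ ?_ T hT)
    intro D hD
    simp only [atomsOf, List.mem_append, List.mem_map, List.mem_flatMap] at hD
    rcases hD with (⟨a, -, rfl⟩ | ⟨r, -, E, hE, rfl⟩) | ⟨E, hE, rfl⟩
    · simp [DLConcept.rank]
    · simpa [DLConcept.rank] using ih E hE
    · simpa [DLConcept.rank, DLConcept.dia] using ih E hE

lemma signedAll_exists (s t : ℕ) (I : S5Interp (Fin (s+1)) (Fin t)) (w : I.W) (d : I.Δ)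
    (L : List (DLConcept (Fin (s+1)) (Fin t))) :
    ∃ T ∈ signedAll s t L, ∀ C ∈ T, DLConcept.Sat I w d C := by
  induction L with
  | nil => simp [signedAll]
  | cons B L ih =>
    obtain ⟨T, hT, h⟩ := ih
    by_cases hB : DLConcept.Sat I w d B
    · refine ⟨B :: T, ?_, ?_⟩
      · simp [signedAll, hT]
      · simpa [hB] using h
    · refine ⟨B.neg :: T, ?_, ?_⟩
      · simp [signedAll, hT]
      · simpa [hB, DLConcept.Sat] using h

lemma signedAll_agree (s t : ℕ) (I J : S5Interp (Fin (s+1)) (Fin t)) (w : I.W) (d : I.Δ)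
    (v : J.W) (e : J.Δ) (L : List (DLConcept (Fin (s+1)) (Fin t))) :
    ∀ T ∈ signedAll s t L, (∀ C ∈ T, DLConcept.Sat I w d C) → (∀ C ∈ T, DLConcept.Sat J v e C) →
      ∀ B ∈ L, (DLConcept.Sat I w d B ↔ DLConcept.Sat J v e B) := by
  induction L with
  | nil => simp
  | cons A L ih =>
    intro T hT hI hJ B hB
    simp only [signedAll, List.mem_append, List.mem_map] at hT
    rcases hT with ⟨T', hT', rfl⟩ | ⟨T', hT', rfl⟩ <;>
    · rw [List.forall_mem_cons] at hI hJ
      rcases List.mem_cons.1 hB with rfl | hB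
      · have h1 := hI.1
        have h2 := hJ.1
        first
          | exact iff_of_true h1 h2
          | exact iff_of_false h1 h2
      · exact ih T' hT' hI.2 hJ.2 B hB

lemma nf_exists (s t k : ℕ) (I : S5Interp (Fin (s+1)) (Fin t)) (w : I.W) (d : I.Δ) :
    ∃ C ∈ nfList s t k, DLConcept.Sat I w d C := by
  cases k with
  | zero =>
    obtain ⟨T, hT, h⟩ := signedAll_exists s t I w d (atomsOf s t [])
    exact ⟨_, List.mem_map_of_mem hT, (sat_bigConj s t I w d T).2 h⟩
  | succ k =>
    obtain ⟨T, hT, h⟩ := signedAll_exists s t I w d (atomsOf s t (nfList s t k))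
    exact ⟨_, List.mem_map_of_mem hT, (sat_bigConj s t I w d T).2 h⟩

lemma nf_bisim (s t k : ℕ) (I J : S5Interp (Fin (s+1)) (Fin t)) :
    ∀ (w : I.W) (d : I.Δ) (v : J.W) (e : J.Δ), ∀ C ∈ nfList s t k,
      DLConcept.Sat I w d C → DLConcept.Sat J v e C → BisimAtDepth I J k w d v e := by
  induction k with
  | zero =>
    intro w d v e C hC hI hJ
    simp only [nfList, List.mem_map] at hC
    obtain ⟨T, hT, rfl⟩ := hC
    rw [sat_bigConj] at hI hJ
    have key := signedAll_agree s t I J w d v e _ T hT hI hJ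
    intro A
    exact key (.atom A) (by simp [atomsOf])
  | succ k ih =>
    intro w d v e C hC hI hJ
    simp only [nfList, List.mem_map] at hC
    obtain ⟨T, hT, rfl⟩ := hC
    rw [sat_bigConj] at hI hJ
    have key := signedAll_agree s t I J w d v e _ T hT hI hJ
    have kd : ∀ D ∈ nfList s t k,
        ((∃ w', DLConcept.Sat I w' d D) ↔ ∃ v', DLConcept.Sat J v' e D) := by
      intro D hD
      have := key D.dia (by
        simp only [atomsOf, List.mem_append]; exact Or.inr (List.mem_map_of_mem hD))
      rwa [sat_dia, sat_dia] at this
    have kr : ∀ r, ∀ D ∈ nfList s t k,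
        (DLConcept.Sat I w d (.ex r D) ↔ DLConcept.Sat J v e (.ex r D)) := by
      intro r D hD
      refine key _ ?_
      simp only [atomsOf, List.mem_append, List.mem_flatMap]
      exact Or.inl (Or.inr ⟨r, List.mem_finRange r, List.mem_map_of_mem hD⟩)
    refine ⟨fun A => key (.atom A) (by simp [atomsOf]), ?_, ?_, ?_, ?_⟩
    · intro w'
      obtain ⟨D, hD, h⟩ := nf_exists s t k I w' d
      obtain ⟨v', h'⟩ := (kd D hD).1 ⟨w', h⟩
      exact ⟨v', ih _ _ _ _ D hD h h'⟩
    · intro v'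
      obtain ⟨D, hD, h⟩ := nf_exists s t k J v' e
      obtain ⟨w', h'⟩ := (kd D hD).2 ⟨v', h⟩
      exact ⟨w', ih _ _ _ _ D hD h' h⟩
    · intro r d' hd
      obtain ⟨D, hD, h⟩ := nf_exists s t k I w d'
      obtain ⟨e', he, h'⟩ := (kr r D hD).1 ⟨d', hd, h⟩
      exact ⟨e', he, ih _ _ _ _ D hD h h'⟩
    · intro r e' he
      obtain ⟨D, hD, h⟩ := nf_exists s t k J v e'
      obtain ⟨d', hd, h'⟩ := (kr r D hD).2 ⟨e', he, h⟩
      exact ⟨d', hd, ih _ _ _ _ D hD h' h⟩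

end NFProof

/-- every ≈ₖ-invariant S5_FOL formula with one free variable x is
logically equivalent to ST_x(D), where D is the disjunction of all rank-k
normal forms satisfied at some point satisfying φ; in particular D is an
S5^loc_ALC-concept of rank (at most) k. -/
theorem nf_characterization (s t k x : ℕ) (φ : FOForm (Fin (s+1)) (Fin t))
    (hfv : φ.freeVars ⊆ {x})
    (hinv : ∀ (I J : S5Interp (Fin (s+1)) (Fin t)) (w : I.W) (d : I.Δ) (v : J.W) (e : J.Δ),
      BisimAtDepth I J k w d v e →
      ∀ (η : ℕ → I.Δ) (θ : ℕ → J.Δ), η x = d → θ x = e →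
        (FOForm.Sat I w η φ ↔ FOForm.Sat J v θ φ)) :
    (phiNF s t k x φ).rank ≤ k ∧
    ∀ (I : S5Interp (Fin (s+1)) (Fin t)) (w : I.W) (d : I.Δ) (η : ℕ → I.Δ), η x = d →
      (FOForm.Sat I w η φ ↔ FOForm.Sat I w η (standardTranslation x (phiNF s t k x φ))) := by
  refine ⟨?_, ?_⟩
  · refine rank_bigDisj s t k _ ?_
    intro C hC
    exact rank_nfList s t k C (List.mem_filter.1 hC).1
  · intro I w d η hη
    rw [st_sat, hη, phiNF, sat_bigDisj]
    constructor
    · intro h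
      obtain ⟨C, hC, hs⟩ := nf_exists s t k I w d
      exact ⟨C, List.mem_filter.2 ⟨hC, (@decide_eq_true _ (Classical.propDecidable _)) ⟨I, w, d, η, hη, h, hs⟩⟩, hs⟩
    · rintro ⟨C, hC, hs⟩
      obtain ⟨hC, hd⟩ := List.mem_filter.1 hC
      obtain ⟨J, v, e, θ, hθ, hφ, hs'⟩ := @of_decide_eq_true _ (Classical.propDecidable _) hd
      exact (hinv I J w d v e (nf_bisim s t k I J w d v e C hC hs hs') η θ hη hθ).2 hφ
end

section
/- The S5_ALC concept ∃◇r.A (existential restriction along the modalized role ◇r) is not bisimulation invariant: there exist finite S5-interpretations I, J, worlds w ∈ W^I, v ∈ W^J, and individuals d ∈ Δ^I, e ∈ Δ^J with I,w,d ≈ J,v,e such that d ∈ (∃◇r.A)^{I,w} but e ∉ (∃◇r.A)^{J,v}. Consequently, ∃◇r.A is not expressible by any S5^loc_ALC-concept. -/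
variable {NC NR : Type}

/-- Satisfaction of the S5_ALC concept ∃◇r.A (existential restriction along
the modalized role ◇r). -/
def SatExDiaRole (NC NR : Type) (A : NC) (r : NR) (I : S5Interp NC NR)
    (w : I.W) (d : I.Δ) : Prop :=
  ∃ e, (∃ v, (d, e) ∈ I.role r v) ∧ e ∈ I.conc A w

/-- Every S5^loc_ALC concept is bisimulation invariant. -/
theorem sat_iff_of_isBisimulation {NC NR : Type} {I J : S5Interp NC NR}
    {R : (I.W × I.Δ) → (J.W × J.Δ) → Prop} (hR : IsBisimulation I J R)
    (C : DLConcept NC NR) : ∀ w d v e, R (w, d) (v, e) →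
      (DLConcept.Sat I w d C ↔ DLConcept.Sat J v e C) := by
  induction C with
  | atom A => intro w d v e h; exact (hR w d v e h).1 A
  | neg C ih => intro w d v e h; exact not_congr (ih w d v e h)
  | and C D ihC ihD => intro w d v e h; exact and_congr (ihC w d v e h) (ihD w d v e h)
  | ex r C ih =>
    intro w d v e h
    obtain ⟨-, -, -, h1, h2⟩ := hR w d v e h
    constructor
    · rintro ⟨d', hd, hs⟩
      obtain ⟨e', he, hr⟩ := h1 r d' hd
      exact ⟨e', he, (ih _ _ _ _ hr).1 hs⟩
    · rintro ⟨e', he, hs⟩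
      obtain ⟨d', hd, hr⟩ := h2 r e' he
      exact ⟨d', hd, (ih _ _ _ _ hr).2 hs⟩
  | box C ih =>
    intro w d v e h
    obtain ⟨-, h1, h2, -, -⟩ := hR w d v e h
    constructor
    · intro hs v'
      obtain ⟨w', hr⟩ := h2 v'
      exact (ih _ _ _ _ hr).1 (hs w')
    · intro hs w'
      obtain ⟨v', hr⟩ := h1 w'
      exact (ih _ _ _ _ hr).2 (hs v')

/-- Individuals a = false, b = true; worlds v₁ = false, v₂ = true. -/
def witI (NC NR : Type) : S5Interp NC NR where
  W := Bool
  Δ := Bool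
  W_nonempty := ⟨false⟩
  Δ_nonempty := ⟨false⟩
  conc _ w := {x | w = false ∧ x = true}
  role _ w := {p | w = true ∧ p.1 = false ∧ p.2 = true}

/-- Individuals a = false, b = true; worlds w₁ = 0, w₂ = 1, w₃ = 2. -/
def witJ (NC NR : Type) : S5Interp NC NR where
  W := Fin 3
  Δ := Bool
  W_nonempty := ⟨0⟩
  Δ_nonempty := ⟨false⟩
  conc _ w := {x | w = 2 ∧ x = true}
  role _ w := {p | w = 1 ∧ p.1 = false ∧ p.2 = true}

/-- The bisimulation between the two witnesses. -/
def witR : (Bool × Bool) → (Fin 3 × Bool) → Prop := fun p q =>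
  p.2 = q.2 ∧ (p.2 = false → (p.1 = true ↔ q.1 = 1)) ∧ (p.2 = true → (p.1 = false ↔ q.1 = 2))

instance witR_dec (p : Bool × Bool) (q : Fin 3 × Bool) : Decidable (witR p q) := by
  unfold witR; infer_instance

theorem witR_isBisimulation (NC NR : Type) :
    IsBisimulation (witI NC NR) (witJ NC NR) witR := by
  have h1 : ∀ (w d : Bool) (v : Fin 3) (e : Bool), witR (w, d) (v, e) →
      ((w = false ∧ d = true) ↔ (v = 2 ∧ e = true)) := by decide
  have h2 : ∀ (w d : Bool) (v : Fin 3) (e : Bool), witR (w, d) (v, e) →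
      ∀ w' : Bool, ∃ v' : Fin 3, witR (w', d) (v', e) := by decide
  have h3 : ∀ (w d : Bool) (v : Fin 3) (e : Bool), witR (w, d) (v, e) →
      ∀ v' : Fin 3, ∃ w' : Bool, witR (w', d) (v', e) := by decide
  have h4 : ∀ (w d : Bool) (v : Fin 3) (e : Bool), witR (w, d) (v, e) →
      ∀ d' : Bool, (w = true ∧ d = false ∧ d' = true) →
        ∃ e' : Bool, (v = 1 ∧ e = false ∧ e' = true) ∧ witR (w, d') (v, e') := by decide
  have h5 : ∀ (w d : Bool) (v : Fin 3) (e : Bool), witR (w, d) (v, e) →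
      ∀ e' : Bool, (v = 1 ∧ e = false ∧ e' = true) →
        ∃ d' : Bool, (w = true ∧ d = false ∧ d' = true) ∧ witR (w, d') (v, e') := by decide
  intro w d v e h
  exact ⟨fun _ => h1 w d v e h, h2 w d v e h, h3 w d v e h,
    fun _ => h4 w d v e h, fun _ => h5 w d v e h⟩

theorem witI_sat (NC NR : Type) (A : NC) (r : NR) :
    SatExDiaRole NC NR A r (witI NC NR) false false :=
  ⟨true, ⟨true, rfl, rfl, rfl⟩, rfl, rfl⟩

theorem witJ_not_sat (NC NR : Type) (A : NC) (r : NR) :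
    ¬ SatExDiaRole NC NR A r (witJ NC NR) (0 : Fin 3) false := by
  rintro ⟨e, -, h, -⟩
  exact absurd (show (0 : Fin 3) = 2 from h) (by decide)

theorem witR_start : witR (false, false) (0, false) := by decide

/-- the S5_ALC concept ∃◇r.A is not bisimulation invariant
(witnessed by finite interpretations), and consequently is not expressible by
any S5^loc_ALC-concept. -/
theorem exDiaRole_not_expressible (NC NR : Type) (A : NC) (r : NR) :
    (∃ (I J : S5Interp NC NR) (w : I.W) (d : I.Δ) (v : J.W) (e : J.Δ),
      Finite I.W ∧ Finite I.Δ ∧ Finite J.W ∧ Finite J.Δ ∧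
      Bisimilar I J w d v e ∧
      SatExDiaRole NC NR A r I w d ∧ ¬ SatExDiaRole NC NR A r J v e) ∧
    ¬ ∃ C : DLConcept NC NR,
      ∀ (I : S5Interp NC NR) (w : I.W) (d : I.Δ),
        SatExDiaRole NC NR A r I w d ↔ DLConcept.Sat I w d C := by
  refine ⟨⟨witI NC NR, witJ NC NR, false, false, (0 : Fin 3), false,
    inferInstanceAs (Finite Bool), inferInstanceAs (Finite Bool),
    inferInstanceAs (Finite (Fin 3)), inferInstanceAs (Finite Bool),
    ⟨witR, witR_isBisimulation NC NR, witR_start⟩,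
    witI_sat NC NR A r, witJ_not_sat NC NR A r⟩, ?_⟩
  rintro ⟨C, hC⟩
  apply witJ_not_sat NC NR A r
  refine (hC (witJ NC NR) (0 : Fin 3) false).2 ?_
  refine (sat_iff_of_isBisimulation (witR_isBisimulation NC NR) C _ _ _ _ witR_start).1 ?_
  exact (hC _ _ _).1 (witI_sat NC NR A r)
end
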